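/- arXiv:2502.12394 — 2 statements merged into one kernel-verified Lean document; each statement's English description precedes it below -/
import Mathlib

section
/- For positive integers d and 1 ≤ a ≤ d+1, the following identity holds in the ring of formal power series ℤ[[q]]: (1 − q − q^{d+1})² · ∑_{n≥1} E(f_d^{(a)}(n), h_d^{(a)}(n)) qⁿ = q^{a+1} − q^{a+1+d}. -/
open Multiset Finset Filter

/-- A partition is encoded as a nonempty multiset of positive integers (its parts). -/
def IsPartition (M : Multiset ℕ) : Prop := M ≠ 0 ∧ ∀ x ∈ M, 0 < x

/-- The perimeter of a partition: (largest part) + (number of parts) - 1. -/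
def perim (M : Multiset ℕ) : ℕ := M.sup + Multiset.card M - 1

/-- `rP n P` counts the partitions (of any sum) with perimeter `n` satisfying `P`. -/
noncomputable def rP (n : ℕ) (P : Multiset ℕ → Prop) : ℕ :=
  Set.ncard {M : Multiset ℕ | IsPartition M ∧ perim M = n ∧ P M}

/-- `fP d a n`: partitions of perimeter n with every part ≡ a (mod d+1). -/
noncomputable def fP (d a n : ℕ) : ℕ :=
  rP n (fun M => ∀ x ∈ M, x % (d + 1) = a % (d + 1))

/-- `hP d a n`: partitions of perimeter n with d-distinct parts, all parts ≥ a. -/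
noncomputable def hP (d a n : ℕ) : ℕ :=
  rP n (fun M => M.Nodup ∧ (∀ x ∈ M, a ≤ x) ∧
    ∀ x ∈ M, ∀ y ∈ M, x ≠ y → d ≤ max x y - min x y)

/-- The set of partitions counted by `fP d a n`. -/
def fSet (d a n : ℕ) : Set (Multiset ℕ) :=
  {M | IsPartition M ∧ perim M = n ∧ ∀ x ∈ M, x % (d + 1) = a % (d + 1)}

/-- The set of partitions counted by `hP d a n`. -/
def hSet (d a n : ℕ) : Set (Multiset ℕ) :=
  {M | IsPartition M ∧ perim M = n ∧ M.Nodup ∧ (∀ x ∈ M, a ≤ x) ∧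
    ∀ x ∈ M, ∀ y ∈ M, x ≠ y → d ≤ max x y - min x y}

/-- The excess of the total number of parts over partitions counted by `fP d a n`
over the total number of parts over partitions counted by `hP d a n`. -/
noncomputable def Efh (d a n : ℕ) : ℤ :=
  (∑ᶠ M ∈ fSet d a n, (Multiset.card M : ℤ)) - ∑ᶠ M ∈ hSet d a n, (Multiset.card M : ℤ)


lemma sup_cons_of_le (L : ℕ) (T : Multiset ℕ) (h : ∀ x ∈ T, x ≤ L) : (L ::ₘ T).sup = L := by
  rw [Multiset.sup_cons]
  exact sup_eq_left.2 (Multiset.sup_le.2 h)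

lemma exists_cons_sup (M : Multiset ℕ) (h : M ≠ 0) :
    ∃ L T, M = L ::ₘ T ∧ ∀ x ∈ T, x ≤ L := by
  have key : M ≠ 0 → M.sup ∈ M := by
    clear h
    induction M using Multiset.induction_on with
    | empty => simp
    | cons b s ih =>
      intro _
      rw [Multiset.sup_cons]
      by_cases hs : s = 0
      · subst hs; simp
      · have := ih hs
        rcases le_total b s.sup with h | h
        · rw [sup_eq_right.2 h]; exact Multiset.mem_cons_of_mem this
        · rw [sup_eq_left.2 h]; exact Multiset.mem_cons_self _ _
  obtain ⟨T, hT⟩ := Multiset.exists_cons_of_mem (key h)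
  refine ⟨M.sup, T, hT, fun x hx => Multiset.le_sup ?_⟩
  rw [hT]; exact Multiset.mem_cons_of_mem hx

/-- Raise the largest part by `r`. -/
def raiseMax (r : ℕ) (M : Multiset ℕ) : Multiset ℕ := (M.sup + r) ::ₘ M.erase M.sup

/-- Add a new part which exceeds the largest part by `k`. -/
def addMax (k : ℕ) (M : Multiset ℕ) : Multiset ℕ := (M.sup + k) ::ₘ M

lemma raiseMax_cons (r L : ℕ) (T : Multiset ℕ) (h : ∀ x ∈ T, x ≤ L) :
    raiseMax r (L ::ₘ T) = (L + r) ::ₘ T := by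
  simp [raiseMax, sup_cons_of_le L T h]

lemma addMax_cons (r L : ℕ) (T : Multiset ℕ) (h : ∀ x ∈ T, x ≤ L) :
    addMax r (L ::ₘ T) = (L + r) ::ₘ L ::ₘ T := by
  simp [addMax, sup_cons_of_le L T h]

lemma sup_raiseMax (r : ℕ) (M : Multiset ℕ) (h : M ≠ 0) : (raiseMax r M).sup = M.sup + r := by
  obtain ⟨L, T, rfl, hT⟩ := exists_cons_sup M h
  rw [raiseMax_cons r L T hT, sup_cons_of_le L T hT, sup_cons_of_le]
  intro x hx; have := hT x hx; omega

lemma card_raiseMax (r : ℕ) (M : Multiset ℕ) (h : M ≠ 0) :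
    Multiset.card (raiseMax r M) = Multiset.card M := by
  obtain ⟨L, T, rfl, hT⟩ := exists_cons_sup M h
  rw [raiseMax_cons r L T hT]; simp

lemma sup_addMax (k : ℕ) (M : Multiset ℕ) : (addMax k M).sup = M.sup + k := by
  simp [addMax]

lemma card_addMax (k : ℕ) (M : Multiset ℕ) :
    Multiset.card (addMax k M) = Multiset.card M + 1 := by
  simp [addMax]

lemma perim_raiseMax (r : ℕ) (M : Multiset ℕ) (h : M ≠ 0) :
    perim (raiseMax r M) = perim M + r := by
  have := Multiset.card_pos.2 h
  simp only [perim, sup_raiseMax r M h, card_raiseMax r M h]; omega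

lemma perim_addMax (r : ℕ) (M : Multiset ℕ) (h : M ≠ 0) :
    perim (addMax r M) = perim M + (r + 1) := by
  have := Multiset.card_pos.2 h
  simp only [perim, sup_addMax, card_addMax]; omega

lemma raiseMax_inj (r : ℕ) (M N : Multiset ℕ) (hM : M ≠ 0) (hN : N ≠ 0)
    (h : raiseMax r M = raiseMax r N) : M = N := by
  have hs := congrArg Multiset.sup h
  rw [sup_raiseMax r M hM, sup_raiseMax r N hN] at hs
  obtain ⟨L, T, rfl, hT⟩ := exists_cons_sup M hM
  obtain ⟨L', T', rfl, hT'⟩ := exists_cons_sup N hN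
  rw [sup_cons_of_le L T hT, sup_cons_of_le L' T' hT'] at hs
  have : L = L' := by omega
  subst this
  rw [raiseMax_cons r L T hT, raiseMax_cons r L T' hT'] at h
  rw [(Multiset.cons_inj_right _).1 h]

lemma addMax_inj (k : ℕ) (M N : Multiset ℕ) (h : addMax k M = addMax k N) : M = N := by
  have hs := congrArg Multiset.sup h
  rw [sup_addMax, sup_addMax] at hs
  unfold addMax at h
  rw [hs] at h
  exact (Multiset.cons_inj_right _).1 h

/-- Partition classes generated from `{a}` by raising and adding. -/
structure GenClass (P : Multiset ℕ → Prop) (a r k : ℕ) : Prop where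
  ne : ∀ M, P M → M ≠ 0
  le : ∀ M, P M → a ≤ M.sup
  base : P {a}
  raise : ∀ M, P M → P (raiseMax r M)
  add : ∀ M, P M → P (addMax k M)
  cases : ∀ M, P M → M = {a} ∨ (∃ N, P N ∧ raiseMax r N = M) ∨ ∃ N, P N ∧ addMax k N = M
  disj : ∀ M N, P M → P N → raiseMax r M ≠ addMax k N

/-- Members of a class of given perimeter. -/
def lev (P : Multiset ℕ → Prop) (n : ℕ) : Set (Multiset ℕ) := {M | P M ∧ perim M = n}

/-- Members of a class of perimeter `n - s`, without truncation. -/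
def levSub (P : Multiset ℕ → Prop) (n s : ℕ) : Set (Multiset ℕ) := {M | P M ∧ perim M + s = n}

lemma levSub_of_le (P : Multiset ℕ → Prop) (n s : ℕ) (h : s ≤ n) :
    levSub P n s = lev P (n - s) := by
  ext M; simp only [levSub, lev, Set.mem_ofPred_eq]
  constructor <;> rintro ⟨h1, h2⟩ <;> exact ⟨h1, by omega⟩

lemma levSub_of_not_le (P : Multiset ℕ → Prop) (n s : ℕ) (h : ¬ s ≤ n) :
    levSub P n s = ∅ := by
  ext M; simp only [levSub, Set.mem_ofPred_eq, Set.mem_empty_iff_false, iff_false]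
  rintro ⟨h1, h2⟩; omega

/-- The base level. -/
def levBase (a n : ℕ) : Set (Multiset ℕ) := {M | M = {a} ∧ a = n}

lemma lev_eq {P : Multiset ℕ → Prop} {a r k : ℕ} (G : GenClass P a r k) (n : ℕ) :
    lev P n = levBase a n ∪ (Set.image (raiseMax r) (levSub P n r) ∪ Set.image (addMax k) (levSub P n (k + 1))) := by
  ext M
  simp only [lev, levBase, levSub, Set.mem_union, Set.mem_image, Set.mem_ofPred_eq]
  constructor
  · rintro ⟨hP, hn⟩
    rcases G.cases M hP with rfl | ⟨N, hN, rfl⟩ | ⟨N, hN, rfl⟩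
    · left; refine ⟨rfl, ?_⟩; simpa [perim] using hn
    · right; left; rw [perim_raiseMax r N (G.ne N hN)] at hn; exact ⟨N, ⟨hN, hn⟩, rfl⟩
    · right; right; rw [perim_addMax k N (G.ne N hN)] at hn; exact ⟨N, ⟨hN, hn⟩, rfl⟩
  · rintro (⟨rfl, rfl⟩ | ⟨N, ⟨hN, rfl⟩, rfl⟩ | ⟨N, ⟨hN, rfl⟩, rfl⟩)
    · exact ⟨G.base, by simp [perim]⟩
    · exact ⟨G.raise N hN, perim_raiseMax r N (G.ne N hN)⟩
    · exact ⟨G.add N hN, perim_addMax k N (G.ne N hN)⟩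

lemma levBase_finite (a n : ℕ) : (levBase a n).Finite :=
  (Set.finite_singleton ({a} : Multiset ℕ)).subset (fun _ h => h.1)

lemma lev_finite {P : Multiset ℕ → Prop} {a r k : ℕ} (G : GenClass P a r k) (hr : 1 ≤ r) (n : ℕ) :
    (lev P n).Finite := by
  induction n using Nat.strong_induction_on with
  | _ n ih =>
    have hs : ∀ s, 1 ≤ s → (levSub P n s).Finite := by
      intro s hs
      by_cases h : s ≤ n
      · rw [levSub_of_le P n s h]; exact ih _ (by omega)
      · rw [levSub_of_not_le P n s h]; exact Set.finite_empty
    rw [lev_eq G]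
    exact (levBase_finite a n).union
      (((hs r hr).image _).union ((hs (k + 1) (by omega)).image _))

lemma levSub_finite {P : Multiset ℕ → Prop} {a r k : ℕ} (G : GenClass P a r k) (hr : 1 ≤ r)
    (n s : ℕ) : (levSub P n s).Finite :=
  (lev_finite G hr (n - s)).subset (fun M h => ⟨h.1, by have := h.2; omega⟩)

lemma lev_sum {P : Multiset ℕ → Prop} {a r k : ℕ} (G : GenClass P a r k) (hr : 1 ≤ r) (n : ℕ)
    (g : Multiset ℕ → ℤ) :
    ∑ᶠ M ∈ lev P n, g M = (if n = a then g {a} else 0) +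
      (∑ᶠ M ∈ levSub P n r, g (raiseMax r M) + ∑ᶠ M ∈ levSub P n (k + 1), g (addMax k M)) := by
  have f1 := (levSub_finite G hr n r).image (raiseMax r)
  have f2 := (levSub_finite G hr n (k + 1)).image (addMax k)
  rw [lev_eq G, finsum_mem_union _ (levBase_finite a n) (f1.union f2), finsum_mem_union _ f1 f2,
    finsum_mem_image, finsum_mem_image]
  · congr 1
    split_ifs with h
    · have : levBase a n = {({a} : Multiset ℕ)} := by
        ext M; simp [levBase, h]
      rw [this, finsum_mem_singleton]
    · have : levBase a n = ∅ := by
        ext M; simp only [levBase, Set.mem_ofPred_eq, Set.mem_empty_iff_false, iff_false]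
        rintro ⟨_, h2⟩; exact h h2.symm
      rw [this, finsum_mem_empty]
  · intro M _ N _ h; exact addMax_inj k M N h
  · intro M hM N hN h; exact raiseMax_inj r M N (G.ne M hM.1) (G.ne N hN.1) h
  · rw [Set.disjoint_left]
    rintro _ ⟨M, hM, rfl⟩ ⟨N, hN, h⟩
    exact G.disj M N hM.1 hN.1 h.symm
  · rw [Set.disjoint_left]
    rintro _ ⟨rfl, h⟩ (⟨N, hN, h2⟩ | ⟨N, hN, h2⟩)
    · have h3 := congrArg Multiset.sup h2
      rw [sup_raiseMax r N (G.ne N hN.1)] at h3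
      have := G.le N hN.1
      simp at h3; omega
    · have h3 := congrArg Multiset.card h2
      rw [card_addMax] at h3
      have := Multiset.card_pos.2 (G.ne N hN.1)
      simp at h3; exact G.ne N hN.1 h3

/-- Generating series of a weight. -/
noncomputable def serW (P : Multiset ℕ → Prop) (g : Multiset ℕ → ℤ) : PowerSeries ℤ :=
  PowerSeries.mk (fun n => ∑ᶠ M ∈ lev P n, g M)

lemma coeff_shift (P : Multiset ℕ → Prop) (g : Multiset ℕ → ℤ) (s n : ℕ) :
    PowerSeries.coeff n (PowerSeries.X ^ s * serW P g) = ∑ᶠ M ∈ levSub P n s, g M := by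
  rw [PowerSeries.coeff_X_pow_mul']
  split_ifs with h
  · rw [levSub_of_le P n s h, serW, PowerSeries.coeff_mk]
  · rw [levSub_of_not_le P n s h, finsum_mem_empty]

lemma ser_one {P : Multiset ℕ → Prop} {a r k : ℕ} (G : GenClass P a r k) (hr : 1 ≤ r) :
    serW P (fun _ => 1) = PowerSeries.X ^ a + (PowerSeries.X ^ r * serW P (fun _ => 1)
      + PowerSeries.X ^ (k + 1) * serW P (fun _ => 1)) := by
  ext n
  rw [_root_.map_add, _root_.map_add, coeff_shift, coeff_shift, PowerSeries.coeff_X_pow, serW,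
    PowerSeries.coeff_mk, lev_sum G hr]

lemma ser_card {P : Multiset ℕ → Prop} {a r k : ℕ} (G : GenClass P a r k) (hr : 1 ≤ r) :
    serW P (fun M => (Multiset.card M : ℤ)) = PowerSeries.X ^ a +
      (PowerSeries.X ^ r * serW P (fun M => (Multiset.card M : ℤ))
      + (PowerSeries.X ^ (k + 1) * serW P (fun M => (Multiset.card M : ℤ))
        + PowerSeries.X ^ (k + 1) * serW P (fun _ => 1))) := by
  ext n
  rw [_root_.map_add, _root_.map_add, _root_.map_add, coeff_shift, coeff_shift, coeff_shift, PowerSeries.coeff_X_pow,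
    ← finsum_mem_add_distrib (levSub_finite G hr n (k + 1)), serW,
    PowerSeries.coeff_mk, lev_sum G hr]
  rw [Multiset.card_singleton, Nat.cast_one]
  refine congrArg₂ _ rfl ?_
  · refine congrArg₂ _ ?_ ?_
    · apply finsum_mem_congr rfl
      intro M hM
      rw [card_raiseMax r M (G.ne M hM.1)]
    · apply finsum_mem_congr rfl
      intro M hM
      rw [card_addMax]; push_cast; rfl

lemma ser_final {P : Multiset ℕ → Prop} {a r k : ℕ} (G : GenClass P a r k) (hr : 1 ≤ r) :
    ((1 : PowerSeries ℤ) - PowerSeries.X ^ r - PowerSeries.X ^ (k + 1)) ^ 2 *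
      serW P (fun M => (Multiset.card M : ℤ)) =
      PowerSeries.X ^ a * (1 - PowerSeries.X ^ r) := by
  have h1 := ser_one G hr
  have h2 := ser_card G hr
  linear_combination (1 - PowerSeries.X ^ r - PowerSeries.X ^ (k + 1)) * h2 +
    PowerSeries.X ^ (k + 1) * h1

/-- The class counted by `fP`. -/
def clsF (d a : ℕ) (M : Multiset ℕ) : Prop :=
  IsPartition M ∧ ∀ x ∈ M, x % (d + 1) = a % (d + 1)

/-- The class counted by `hP`. -/
def clsH (d a : ℕ) (M : Multiset ℕ) : Prop :=
  IsPartition M ∧ M.Nodup ∧ (∀ x ∈ M, a ≤ x) ∧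
    ∀ x ∈ M, ∀ y ∈ M, x ≠ y → d ≤ max x y - min x y

lemma mod_gap (m x y : ℕ) (h : x % m = y % m) (hl : x < y) : x + m ≤ y := by
  have h1 : m ∣ y - x := (Nat.modEq_iff_dvd' hl.le).1 h
  have := Nat.le_of_dvd (by omega) h1
  omega

lemma mod_ge (d a x : ℕ) (ha2 : a ≤ d + 1) (hx : 0 < x) (h : x % (d + 1) = a % (d + 1)) :
    a ≤ x := by
  by_contra hl
  have := mod_gap (d + 1) x a h (by omega)
  omega

lemma genF (d a : ℕ) (ha1 : 1 ≤ a) (ha2 : a ≤ d + 1) : GenClass (clsF d a) a (d + 1) 0 where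
  ne M h := h.1.1
  le M h := by
    obtain ⟨L, T, rfl, hT⟩ := exists_cons_sup M h.1.1
    rw [sup_cons_of_le L T hT]
    exact mod_ge d a L ha2 (h.1.2 L (by simp)) (h.2 L (by simp))
  base := by
    refine ⟨⟨by simp, ?_⟩, ?_⟩ <;> intro x hx <;> rw [Multiset.mem_singleton] at hx <;> subst hx
    · omega
    · rfl
  raise M h := by
    obtain ⟨L, T, rfl, hT⟩ := exists_cons_sup M h.1.1
    rw [raiseMax_cons _ L T hT]
    obtain ⟨⟨_, h1⟩, h2⟩ := h
    simp only [Multiset.mem_cons, forall_eq_or_imp] at h1 h2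
    refine ⟨⟨by simp, ?_⟩, ?_⟩ <;> simp only [Multiset.mem_cons, forall_eq_or_imp]
    · exact ⟨by omega, h1.2⟩
    · exact ⟨by rw [Nat.add_mod_right]; exact h2.1, h2.2⟩
  add M h := by
    obtain ⟨L, T, rfl, hT⟩ := exists_cons_sup M h.1.1
    rw [addMax_cons _ L T hT]
    obtain ⟨⟨_, h1⟩, h2⟩ := h
    simp only [Multiset.mem_cons, forall_eq_or_imp] at h1 h2
    refine ⟨⟨by simp, ?_⟩, ?_⟩ <;> simp only [Multiset.mem_cons, forall_eq_or_imp]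
    · exact ⟨h1.1, h1⟩
    · exact ⟨h2.1, h2⟩
  cases M h := by
    obtain ⟨L, T, rfl, hT⟩ := exists_cons_sup M h.1.1
    obtain ⟨⟨_, h1⟩, h2⟩ := h
    simp only [Multiset.mem_cons, forall_eq_or_imp] at h1 h2
    by_cases hL : L ∈ T
    · right; right
      obtain ⟨U, rfl⟩ := Multiset.exists_cons_of_mem hL
      refine ⟨L ::ₘ U, ⟨⟨by simp, h1.2⟩, h2.2⟩, ?_⟩
      rw [addMax_cons _ L U (fun x hx => hT x (Multiset.mem_cons_of_mem hx))]
      rfl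
    · by_cases hLa : L = a
      · left
        subst hLa
        have : T = 0 := by
          apply Multiset.eq_zero_of_forall_notMem
          intro x hx
          have e1 := hT x hx
          have e2 := mod_ge d L x ha2 (h1.2 x hx) (h2.2 x hx)
          have : x = L := by omega
          subst this; exact hL hx
        rw [this]; rfl
      · right; left
        have e1 := mod_ge d a L ha2 h1.1 h2.1
        have e2 := mod_gap (d + 1) a L h2.1.symm (by omega)
        have e3 : ∀ x ∈ T, x ≤ L - (d + 1) := by
          intro x hx
          have e4 := hT x hx
          have e5 : x ≠ L := fun e => hL (e ▸ hx)
          have := mod_gap (d + 1) x L ((h2.2 x hx).trans h2.1.symm) (by omega)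
          omega
        refine ⟨(L - (d + 1)) ::ₘ T, ⟨⟨by simp, ?_⟩, ?_⟩, ?_⟩
        · simp only [Multiset.mem_cons, forall_eq_or_imp]
          exact ⟨by omega, h1.2⟩
        · simp only [Multiset.mem_cons, forall_eq_or_imp]
          refine ⟨?_, h2.2⟩
          rw [← Nat.add_mod_right, Nat.sub_add_cancel (by omega)]; exact h2.1
        · rw [raiseMax_cons _ _ _ e3, Nat.sub_add_cancel (by omega)]
  disj M N hM hN h := by
    have hs := congrArg Multiset.sup h
    rw [sup_raiseMax _ M hM.1.1, sup_addMax] at hs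
    obtain ⟨L, T, rfl, hT⟩ := exists_cons_sup M hM.1.1
    obtain ⟨L', T', rfl, hT'⟩ := exists_cons_sup N hN.1.1
    rw [sup_cons_of_le L T hT, sup_cons_of_le L' T' hT'] at hs
    rw [raiseMax_cons _ L T hT, addMax_cons _ L' T' hT', hs, Multiset.cons_inj_right] at h
    have := hT L' (by rw [h]; simp)
    omega

lemma clsH_cons (d a L : ℕ) (T : Multiset ℕ) (hd : 1 ≤ d) (ha1 : 1 ≤ a) (hT : ∀ x ∈ T, x ≤ L) :
    clsH d a (L ::ₘ T) ↔ a ≤ L ∧ (∀ x ∈ T, x + d ≤ L) ∧ (T = 0 ∨ clsH d a T) := by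
  constructor
  · rintro ⟨⟨_, h1⟩, h2, h3, h4⟩
    rw [Multiset.nodup_cons] at h2
    refine ⟨h3 L (by simp), ?_, ?_⟩
    · intro x hx
      have e1 := hT x hx
      have e2 : x ≠ L := fun e => h2.1 (e ▸ hx)
      have := h4 x (by simp [hx]) L (by simp) e2
      omega
    · by_cases h0 : T = 0
      · exact Or.inl h0
      · right
        exact ⟨⟨h0, fun x hx => h1 x (by simp [hx])⟩, h2.2, fun x hx => h3 x (by simp [hx]),
          fun x hx y hy => h4 x (by simp [hx]) y (by simp [hy])⟩
  · rintro ⟨h1, h2, h3⟩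
    have h5 : T.Nodup ∧ (∀ x ∈ T, a ≤ x) ∧
        ∀ x ∈ T, ∀ y ∈ T, x ≠ y → d ≤ max x y - min x y := by
      rcases h3 with rfl | h3
      · simp
      · exact h3.2
    obtain ⟨h6, h7, h8⟩ := h5
    have h9 : ∀ x ∈ L ::ₘ T, a ≤ x := by
      simp only [Multiset.mem_cons, forall_eq_or_imp]; exact ⟨h1, h7⟩
    refine ⟨⟨by simp, fun x hx => by have := h9 x hx; omega⟩, ?_, h9, ?_⟩
    · rw [Multiset.nodup_cons]
      refine ⟨fun h => ?_, h6⟩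
      have := h2 L h; omega
    · intro x hx y hy hxy
      rw [Multiset.mem_cons] at hx hy
      rcases hx with rfl | hx <;> rcases hy with rfl | hy
      · exact absurd rfl hxy
      · have := h2 y hy; omega
      · have := h2 x hx; omega
      · exact h8 x hx y hy hxy

lemma genH (d a : ℕ) (hd : 1 ≤ d) (ha1 : 1 ≤ a) : GenClass (clsH d a) a 1 d where
  ne M h := h.1.1
  le M h := by
    obtain ⟨L, T, rfl, hT⟩ := exists_cons_sup M h.1.1
    rw [sup_cons_of_le L T hT]
    exact h.2.2.1 L (by simp)
  base := (clsH_cons d a a 0 hd ha1 (by simp)).2 (by simp)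
  raise M h := by
    obtain ⟨L, T, rfl, hT⟩ := exists_cons_sup M h.1.1
    rw [raiseMax_cons _ L T hT]
    rw [clsH_cons d a L T hd ha1 hT] at h
    rw [clsH_cons d a (L + 1) T hd ha1 (fun x hx => by have := hT x hx; omega)]
    exact ⟨by omega, fun x hx => by have := h.2.1 x hx; omega, h.2.2⟩
  add M h := by
    obtain ⟨L, T, rfl, hT⟩ := exists_cons_sup M h.1.1
    rw [addMax_cons _ L T hT]
    have e : ∀ x ∈ L ::ₘ T, x + d ≤ L + d := by
      simp only [Multiset.mem_cons, forall_eq_or_imp]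
      exact ⟨le_rfl, fun x hx => by have := hT x hx; omega⟩
    rw [clsH_cons d a (L + d) (L ::ₘ T) hd ha1 (fun x hx => by have := e x hx; omega)]
    have := h.2.2.1 L (by simp)
    exact ⟨by omega, e, Or.inr h⟩
  cases M h := by
    obtain ⟨L, T, rfl, hT⟩ := exists_cons_sup M h.1.1
    rw [clsH_cons d a L T hd ha1 hT] at h
    obtain ⟨h1, h2, h3⟩ := h
    by_cases hlow : a + 1 ≤ L ∧ ∀ x ∈ T, x + d + 1 ≤ L
    · right; left
      have e : ∀ x ∈ T, x ≤ L - 1 := fun x hx => by have := hlow.2 x hx; omega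
      refine ⟨(L - 1) ::ₘ T, ?_, ?_⟩
      · rw [clsH_cons d a _ T hd ha1 e]
        exact ⟨by omega, fun x hx => by have := hlow.2 x hx; omega, h3⟩
      · rw [raiseMax_cons _ _ _ e, Nat.sub_add_cancel (by omega)]
    · rcases h3 with rfl | h3
      · left
        have : L = a := by
          by_contra hne
          exact hlow ⟨by omega, by simp⟩
        rw [this]; rfl
      · right; right
        refine ⟨T, h3, ?_⟩
        have h0 := h3.1.1
        have h30 := h3.2.2.1
        obtain ⟨L', T', rfl, hT'⟩ := exists_cons_sup T h0
        rw [addMax_cons _ _ _ hT']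
        have e1 := h2 L' (by simp)
        have e2 := h30 L' (by simp)
        have : L' + d = L := by
          by_contra hne
          apply hlow
          refine ⟨by omega, ?_⟩
          simp only [Multiset.mem_cons, forall_eq_or_imp]
          exact ⟨by omega, fun x hx => by have := hT' x hx; omega⟩
        rw [this]
  disj M N hM hN h := by
    have hs := congrArg Multiset.sup h
    rw [sup_raiseMax _ M hM.1.1, sup_addMax] at hs
    obtain ⟨L, T, rfl, hT⟩ := exists_cons_sup M hM.1.1
    obtain ⟨L', T', rfl, hT'⟩ := exists_cons_sup N hN.1.1
    rw [sup_cons_of_le L T hT, sup_cons_of_le L' T' hT'] at hs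
    rw [raiseMax_cons _ L T hT, addMax_cons _ L' T' hT', hs, Multiset.cons_inj_right] at h
    rw [clsH_cons d a L T hd ha1 hT] at hM
    have := hM.2.1 L' (by rw [h]; simp)
    omega

lemma fSet_eq (d a n : ℕ) : fSet d a n = lev (clsF d a) n := by
  ext M; simp only [fSet, lev, clsF, Set.mem_ofPred_eq]; tauto

lemma hSet_eq (d a n : ℕ) : hSet d a n = lev (clsH d a) n := by
  ext M; simp only [hSet, lev, clsH, Set.mem_ofPred_eq]; tauto

lemma lev_zero {P : Multiset ℕ → Prop} {a r k : ℕ} (G : GenClass P a r k) (ha : 1 ≤ a) :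
    lev P 0 = ∅ := by
  ext M; simp only [lev, Set.mem_ofPred_eq, Set.mem_empty_iff_false, iff_false]
  rintro ⟨h1, h2⟩
  have e1 := G.le M h1
  have e2 := Multiset.card_pos.2 (G.ne M h1)
  unfold perim at h2
  omega

theorem stmt_17 (d a : ℕ) (hd : 1 ≤ d) (ha1 : 1 ≤ a) (ha2 : a ≤ d + 1) :
    ((1 : PowerSeries ℤ) - PowerSeries.X - PowerSeries.X ^ (d + 1)) ^ 2 *
        PowerSeries.mk (fun n => if n = 0 then 0 else Efh d a n) =
      PowerSeries.X ^ (a + 1) - PowerSeries.X ^ (a + 1 + d) := by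
  have hF := genF d a ha1 ha2
  have hH := genH d a hd ha1
  have hE : PowerSeries.mk (fun n => if n = 0 then 0 else Efh d a n) =
      serW (clsF d a) (fun M => (Multiset.card M : ℤ)) -
      serW (clsH d a) (fun M => (Multiset.card M : ℤ)) := by
    ext n
    rw [_root_.map_sub, serW, serW, PowerSeries.coeff_mk, PowerSeries.coeff_mk, PowerSeries.coeff_mk]
    split_ifs with h
    · subst h
      rw [lev_zero hF ha1, lev_zero hH ha1]; simp
    · rw [Efh, fSet_eq, hSet_eq]
  have e1 := ser_final hF (by omega)
  have e2 := ser_final hH le_rfl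
  rw [hE]
  simp only [zero_add, pow_one] at e1 e2
  linear_combination e1 - e2
end

section
/- For positive integers d, 1 ≤ a ≤ d+1, and b ∈ {1, d+1}, the following identity holds in the ring of formal power series ℤ[[q]]: (1 − q − q^{d+1})² · ∑_{n≥1} (∑_{m=1}^{n−1} f_d^{(a)}(n−m) f_d^{(b)}(m)) qⁿ = q^{a+b}. -/
open Multiset Finset Filter

namespace Perim18

def PP (d a : ℕ) (M : Multiset ℕ) : Prop :=
  IsPartition M ∧ ∀ x ∈ M, x % (d + 1) = a % (d + 1)

lemma sup_cons_of_le (s : ℕ) (T : Multiset ℕ) (h : ∀ x ∈ T, x ≤ s) : (s ::ₘ T).sup = s := by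
  rw [Multiset.sup_cons]
  exact sup_eq_left.2 (Multiset.sup_le.2 h)

lemma exists_form (M : Multiset ℕ) (h : M ≠ 0) :
    ∃ s T, M = s ::ₘ T ∧ ∀ x ∈ T, x ≤ s := by
  induction M using Multiset.induction_on with
  | empty => exact absurd rfl h
  | cons x M ih =>
    by_cases hM : M = 0
    · exact ⟨x, 0, by rw [hM], by simp⟩
    · obtain ⟨s, T, rfl, hT⟩ := ih hM
      rcases le_total s x with hx | hx
      · refine ⟨x, s ::ₘ T, rfl, ?_⟩
        intro y hy
        rcases Multiset.mem_cons.1 hy with rfl | hy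
        · exact hx
        · exact (hT y hy).trans hx
      · refine ⟨s, x ::ₘ T, Multiset.cons_swap _ _ _, ?_⟩
        intro y hy
        rcases Multiset.mem_cons.1 hy with rfl | hy
        · exact hx
        · exact hT y hy

lemma perim_form (s : ℕ) (T : Multiset ℕ) (h : ∀ x ∈ T, x ≤ s) :
    perim (s ::ₘ T) = s + Multiset.card T := by
  rw [perim, sup_cons_of_le s T h, Multiset.card_cons]; omega

def up1 (M : Multiset ℕ) : Multiset ℕ := M.sup ::ₘ M
def up2 (d : ℕ) (M : Multiset ℕ) : Multiset ℕ := (M.sup + (d + 1)) ::ₘ M.erase M.sup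

lemma up1_form (s : ℕ) (T : Multiset ℕ) (h : ∀ x ∈ T, x ≤ s) :
    up1 (s ::ₘ T) = s ::ₘ s ::ₘ T := by rw [up1, sup_cons_of_le s T h]

lemma up2_form (d s : ℕ) (T : Multiset ℕ) (h : ∀ x ∈ T, x ≤ s) :
    up2 d (s ::ₘ T) = (s + (d + 1)) ::ₘ T := by
  rw [up2, sup_cons_of_le s T h, Multiset.erase_cons_head]

/-- the shifted sets -/
def B (d a j n : ℕ) : Set (Multiset ℕ) := {M | PP d a M ∧ perim M + j = n}

lemma form_inj (s s' : ℕ) (T T' : Multiset ℕ) (h : ∀ x ∈ T, x ≤ s) (h' : ∀ x ∈ T', x ≤ s')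
    (e : s ::ₘ T = s' ::ₘ T') : s = s' ∧ T = T' := by
  have : s = s' := by rw [← sup_cons_of_le s T h, e, sup_cons_of_le s' T' h']
  subst this
  exact ⟨rfl, (Multiset.cons_inj_right s).1 e⟩

lemma le_cons_self (s : ℕ) (T : Multiset ℕ) (h : ∀ x ∈ T, x ≤ s) : ∀ x ∈ s ::ₘ T, x ≤ s := by
  intro x hx
  rcases Multiset.mem_cons.1 hx with rfl | hx
  · exact le_rfl
  · exact h x hx

lemma inj1 (d a j n : ℕ) : Set.InjOn up1 (B d a j n) := by
  intro M hM N hN e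
  obtain ⟨s, T, rfl, hT⟩ := exists_form M hM.1.1.1
  obtain ⟨s', T', rfl, hT'⟩ := exists_form N hN.1.1.1
  rw [up1_form _ _ hT, up1_form _ _ hT'] at e
  exact (form_inj _ _ _ _ (le_cons_self _ _ hT) (le_cons_self _ _ hT') e).2

lemma inj2 (d a j n : ℕ) : Set.InjOn (up2 d) (B d a j n) := by
  intro M hM N hN e
  obtain ⟨s, T, rfl, hT⟩ := exists_form M hM.1.1.1
  obtain ⟨s', T', rfl, hT'⟩ := exists_form N hN.1.1.1
  rw [up2_form _ _ _ hT, up2_form _ _ _ hT'] at e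
  obtain ⟨h1, h2⟩ := form_inj _ _ _ _ (fun x hx => (hT x hx).trans (by omega))
    (fun x hx => (hT' x hx).trans (by omega)) e
  have : s = s' := by omega
  rw [this, h2]

lemma PP_cons (d a s : ℕ) (T : Multiset ℕ) : PP d a (s ::ₘ T) ↔
    (0 < s ∧ s % (d + 1) = a % (d + 1)) ∧ ∀ x ∈ T, 0 < x ∧ x % (d + 1) = a % (d + 1) := by
  unfold PP IsPartition
  simp only [Multiset.mem_cons, forall_eq_or_imp, ne_eq, Multiset.cons_ne_zero, not_false_eq_true,
    true_and]
  constructor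
  · rintro ⟨⟨h1, h2⟩, h3, h4⟩
    exact ⟨⟨h1, h3⟩, fun x hx => ⟨h2 x hx, h4 x hx⟩⟩
  · rintro ⟨⟨h1, h3⟩, h4⟩
    exact ⟨⟨h1, fun x hx => (h4 x hx).1⟩, h3, fun x hx => (h4 x hx).2⟩

lemma step {k x y : ℕ} (h : x % k = y % k) (hlt : x < y) : x + k ≤ y := by
  have h1 : k ∣ y - x := (Nat.modEq_iff_dvd' hlt.le).1 h
  have := Nat.le_of_dvd (by omega) h1
  omega

lemma ge_a {d a x : ℕ} (ha2 : a ≤ d + 1) (hx : 0 < x) (h : x % (d + 1) = a % (d + 1)) :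
    a ≤ x := by
  by_contra hc
  have := step h (by omega)
  omega

lemma decomp (d a n : ℕ) (ha1 : 1 ≤ a) (ha2 : a ≤ d + 1) :
    B d a 0 n = (up1 '' B d a 1 n ∪ up2 d '' B d a (d + 1) n) ∪ {M | M = {a} ∧ n = a} := by
  ext M
  constructor
  · intro hM
    obtain ⟨s, T, rfl, hT⟩ := exists_form M hM.1.1.1
    obtain ⟨hP, hn⟩ := hM
    rw [perim_form _ _ hT] at hn
    rw [PP_cons] at hP
    by_cases hs : s ∈ T
    · obtain ⟨T', rfl⟩ := Multiset.exists_cons_of_mem hs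
      have hT' : ∀ x ∈ T', x ≤ s := fun x hx => hT x (Multiset.mem_cons_of_mem hx)
      refine Or.inl (Or.inl ⟨s ::ₘ T', ⟨?_, ?_⟩, up1_form _ _ hT'⟩)
      · rw [PP_cons]
        exact ⟨hP.1, fun x hx => hP.2 x (Multiset.mem_cons_of_mem hx)⟩
      · rw [perim_form _ _ hT']
        rw [Multiset.card_cons] at hn
        omega
    · have hlt : ∀ x ∈ T, x < s := fun x hx =>
        lt_of_le_of_ne (hT x hx) (fun e => hs (e ▸ hx))
      have has := ge_a ha2 hP.1.1 hP.1.2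
      rcases has.eq_or_lt with rfl | has
      · have : T = 0 := by
          refine Multiset.eq_zero_of_forall_notMem fun x hx => ?_
          have h1 := hlt x hx
          have h2 := ge_a ha2 (hP.2 x hx).1 (hP.2 x hx).2
          omega
        subst this
        right
        refine ⟨rfl, ?_⟩
        simp at hn
        omega
      · have h1 := step hP.1.2.symm has
        obtain ⟨s', rfl⟩ : ∃ s', s = s' + (d + 1) := ⟨s - (d + 1), by omega⟩
        have hT' : ∀ x ∈ T, x ≤ s' := by
          intro x hx
          have := step ((hP.2 x hx).2.trans hP.1.2.symm) (hlt x hx)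
          omega
        refine Or.inl (Or.inr ⟨s' ::ₘ T, ⟨?_, ?_⟩, up2_form _ _ _ hT'⟩)
        · rw [PP_cons]
          refine ⟨⟨by omega, ?_⟩, hP.2⟩
          have := hP.1.2
          rwa [Nat.add_mod_right] at this
        · rw [perim_form _ _ hT']
          omega
  · rintro ((⟨N, hN, rfl⟩ | ⟨N, hN, rfl⟩) | ⟨rfl, rfl⟩)
    · obtain ⟨s, T, rfl, hT⟩ := exists_form N hN.1.1.1
      obtain ⟨hP, hn⟩ := hN
      rw [perim_form _ _ hT] at hn
      rw [up1_form _ _ hT]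
      refine ⟨?_, ?_⟩
      · rw [PP_cons] at hP ⊢
        refine ⟨hP.1, fun x hx => ?_⟩
        rcases Multiset.mem_cons.1 hx with rfl | hx
        · exact hP.1
        · exact hP.2 x hx
      · rw [perim_form _ _ (le_cons_self _ _ hT), Multiset.card_cons]
        omega
    · obtain ⟨s, T, rfl, hT⟩ := exists_form N hN.1.1.1
      obtain ⟨hP, hn⟩ := hN
      rw [perim_form _ _ hT] at hn
      rw [up2_form _ _ _ hT]
      refine ⟨?_, ?_⟩
      · rw [PP_cons] at hP ⊢
        exact ⟨⟨by omega, by rw [Nat.add_mod_right]; exact hP.1.2⟩, hP.2⟩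
      · rw [perim_form _ _ (fun x hx => (hT x hx).trans (by omega))]
        omega
    · have : ({n} : Multiset ℕ) = n ::ₘ 0 := rfl
      rw [this]
      refine ⟨?_, ?_⟩
      · rw [PP_cons]
        exact ⟨⟨by omega, rfl⟩, by simp⟩
      · rw [perim_form _ _ (by simp)]; simp

lemma B_shift (d a j n : ℕ) (h : j ≤ n) : B d a j n = B d a 0 (n - j) := by
  ext M
  exact and_congr_right fun _ => by omega

lemma B_empty (d a j n : ℕ) (h : n < j) : B d a j n = ∅ := by
  ext M
  simp only [B, Set.mem_setOf_eq, Set.mem_empty_iff_false, iff_false]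
  omega

lemma B_finite (d a : ℕ) (ha1 : 1 ≤ a) (ha2 : a ≤ d + 1) (n : ℕ) : (B d a 0 n).Finite := by
  induction n using Nat.strong_induction_on with
  | _ n ih =>
    have key : ∀ j, 0 < j → (B d a j n).Finite := by
      intro j hj
      by_cases h : j ≤ n
      · rw [B_shift _ _ _ _ h]; exact ih _ (by omega)
      · rw [B_empty _ _ _ _ (by omega)]; exact Set.finite_empty
    rw [decomp d a n ha1 ha2]
    refine (((key _ (by omega)).image _).union ((key _ (by omega)).image _)).union ?_
    exact (Set.finite_singleton ({a} : Multiset ℕ)).subset fun M hM => hM.1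

lemma B_finite' (d a : ℕ) (ha1 : 1 ≤ a) (ha2 : a ≤ d + 1) (j n : ℕ) : (B d a j n).Finite := by
  by_cases h : j ≤ n
  · rw [B_shift _ _ _ _ h]; exact B_finite d a ha1 ha2 _
  · rw [B_empty _ _ _ _ (by omega)]; exact Set.finite_empty

lemma rec_ncard (d a n : ℕ) (ha1 : 1 ≤ a) (ha2 : a ≤ d + 1) :
    (B d a 0 n).ncard = (B d a 1 n).ncard + (B d a (d + 1) n).ncard + if n = a then 1 else 0 := by
  have f1 := (B_finite' d a ha1 ha2 1 n).image up1
  have f2 := (B_finite' d a ha1 ha2 (d + 1) n).image (up2 d)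
  have f3 : {M : Multiset ℕ | M = {a} ∧ n = a}.Finite :=
    (Set.finite_singleton ({a} : Multiset ℕ)).subset fun M hM => hM.1
  rw [decomp d a n ha1 ha2, Set.ncard_union_eq ?_ (f1.union f2) f3, Set.ncard_union_eq ?_ f1 f2,
    Set.ncard_image_of_injOn (inj1 _ _ _ _), Set.ncard_image_of_injOn (inj2 _ _ _ _)]
  · congr 1
    split_ifs with h
    · simp [h]
    · simp [h]
  · rw [Set.disjoint_left]
    rintro _ ⟨M, hM, rfl⟩ ⟨N, hN, e⟩
    obtain ⟨s, T, rfl, hT⟩ := exists_form M hM.1.1.1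
    obtain ⟨s', T', rfl, hT'⟩ := exists_form N hN.1.1.1
    rw [up1_form _ _ hT, up2_form _ _ _ hT'] at e
    obtain ⟨h1, h2⟩ := form_inj _ _ _ _ (fun x hx => (hT' x hx).trans (by omega))
      (le_cons_self _ _ hT) e
    have := hT' s (by rw [h2]; exact Multiset.mem_cons_self _ _)
    omega
  · rw [Set.disjoint_left]
    rintro _ (⟨M, hM, rfl⟩ | ⟨M, hM, rfl⟩) ⟨e, -⟩
    · obtain ⟨s, T, rfl, hT⟩ := exists_form M hM.1.1.1
      rw [up1_form _ _ hT] at e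
      have := congrArg Multiset.card e
      simp at this
    · obtain ⟨s, T, rfl, hT⟩ := exists_form M hM.1.1.1
      rw [up2_form _ _ _ hT] at e
      have h1 : s + (d + 1) ∈ ({a} : Multiset ℕ) := by
        rw [← e]; exact Multiset.mem_cons_self _ _
      have h2 := (PP_cons _ _ _ _).1 hM.1
      rw [Multiset.mem_singleton] at h1
      omega

lemma fP_eq (d a n : ℕ) : fP d a n = (B d a 0 n).ncard := by
  unfold fP rP
  congr 1
  ext M
  simp only [B, PP, Set.mem_setOf_eq, add_zero]
  tauto

lemma fP_zero (d a : ℕ) : fP d a 0 = 0 := by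
  rw [fP_eq]
  have : B d a 0 0 = ∅ := by
    ext M
    simp only [Set.mem_empty_iff_false, iff_false]
    intro hM
    obtain ⟨s, T, rfl, hT⟩ := exists_form M hM.1.1.1
    have h1 := hM.2
    have h2 := (PP_cons _ _ _ _).1 hM.1
    rw [perim_form _ _ hT] at h1
    omega
  rw [this, Set.ncard_empty]

lemma B_ncard (d a j n : ℕ) : (B d a j n).ncard = if j ≤ n then fP d a (n - j) else 0 := by
  split_ifs with h
  · rw [B_shift _ _ _ _ h, fP_eq]
  · rw [B_empty _ _ _ _ (by omega), Set.ncard_empty]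

noncomputable def F (d a : ℕ) : PowerSeries ℤ := PowerSeries.mk fun n => (fP d a n : ℤ)

lemma F_eq (d a : ℕ) (ha1 : 1 ≤ a) (ha2 : a ≤ d + 1) :
    ((1 : PowerSeries ℤ) - PowerSeries.X - PowerSeries.X ^ (d + 1)) * F d a
      = PowerSeries.X ^ a := by
  ext n
  have h := rec_ncard d a n ha1 ha2
  rw [← fP_eq, B_ncard, B_ncard] at h
  have e : ((1 : PowerSeries ℤ) - PowerSeries.X - PowerSeries.X ^ (d + 1)) * F d a
    = F d a - PowerSeries.X ^ 1 * F d a - PowerSeries.X ^ (d + 1) * F d a := by ring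
  rw [e, map_sub, map_sub, PowerSeries.coeff_X_pow_mul', PowerSeries.coeff_X_pow_mul',
    PowerSeries.coeff_X_pow]
  simp only [F, PowerSeries.coeff_mk]
  rw [h]
  push_cast
  ring

lemma conv (d a b : ℕ) : PowerSeries.mk (fun n => if n = 0 then 0 else
          ((∑ m ∈ Finset.Icc 1 (n - 1), fP d a (n - m) * fP d b m : ℕ) : ℤ)) = F d a * F d b := by
  ext n
  rw [mul_comm, PowerSeries.coeff_mul, Finset.Nat.sum_antidiagonal_eq_sum_range_succ_mk]
  simp only [F, PowerSeries.coeff_mk]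
  split_ifs with h
  · subst h
    simp [fP_zero]
  · push_cast
    have hsub : Finset.Icc 1 (n - 1) ⊆ Finset.range n.succ := by
      intro x hx
      rw [Finset.mem_Icc] at hx
      rw [Finset.mem_range]
      omega
    rw [← Finset.sum_subset hsub]
    · exact Finset.sum_congr rfl fun x _ => mul_comm _ _
    · intro x hx hx'
      rw [Finset.mem_Icc] at hx'
      rw [Finset.mem_range] at hx
      have : x = 0 ∨ n - x = 0 := by omega
      rcases this with h | h <;> rw [h, fP_zero] <;> simp

end Perim18

theorem stmt_18 (d a b : ℕ) (hd : 1 ≤ d) (ha1 : 1 ≤ a) (ha2 : a ≤ d + 1)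
    (hb : b = 1 ∨ b = d + 1) :
    ((1 : PowerSeries ℤ) - PowerSeries.X - PowerSeries.X ^ (d + 1)) ^ 2 *
        PowerSeries.mk (fun n => if n = 0 then 0 else
          ((∑ m ∈ Finset.Icc 1 (n - 1), fP d a (n - m) * fP d b m : ℕ) : ℤ)) =
      PowerSeries.X ^ (a + b) := by
  rw [Perim18.conv, pow_add _ a b, ← Perim18.F_eq d a ha1 ha2,
    ← Perim18.F_eq d b (by omega) (by omega)]
  ring
end
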